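/- Assume CH. Then there exists a set A ⊆ ℝ² such that every horizontal slice A^y is a strong Luzin set, every vertical slice A_x is a strong Sierpiński set, and A is both completely 𝓜-nonmeasurable and completely 𝓝-nonmeasurable. -/

import Mathlib

open Cardinal MeasureTheory Set
open scoped Pointwise

/-- `I` is a σ-ideal on `ℝ`. -/
def IsSigmaIdeal (I : Set (Set ℝ)) : Prop :=
  ∅ ∈ I ∧ (∀ A B : Set ℝ, A ⊆ B → B ∈ I → A ∈ I) ∧
    ∀ f : ℕ → Set ℝ, (∀ n, f n ∈ I) → (⋃ n, f n) ∈ I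

/-- The standing assumptions on the σ-ideal `I`: nontriviality, translation and scale
invariance, Borel base and the Steinhaus property. -/
def StandingIdeal (I : Set (Set ℝ)) : Prop :=
  IsSigmaIdeal I ∧
  Set.univ ∉ I ∧
  (∀ x : ℝ, ∀ S ∈ I, (fun y => x + y) '' S ∈ I) ∧
  (∀ x : ℝ, ∀ S ∈ I, (fun y => x * y) '' S ∈ I) ∧
  (∀ S ∈ I, ∃ B ∈ I, MeasurableSet B ∧ S ⊆ B) ∧
  (∀ A B : Set ℝ, MeasurableSet A → MeasurableSet B → A ∉ I → B ∉ I →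
    (interior (A - B)).Nonempty)

/-- `L` is an `I`-Luzin set. -/
def IsLuzinFor (I : Set (Set ℝ)) (L : Set ℝ) : Prop :=
  Cardinal.mk L = Cardinal.continuum ∧ ∀ S ∈ I, (L ∩ S).Countable

/-- `L` is a strong `I`-Luzin set. -/
def IsStrongLuzinFor (I : Set (Set ℝ)) (L : Set ℝ) : Prop :=
  IsLuzinFor I L ∧ ∀ B : Set ℝ, MeasurableSet B → B ∉ I → ¬ (L ∩ B).Countable

/-- `L` is a Luzin set. -/
def IsLuzin (L : Set ℝ) : Prop :=
  Cardinal.mk L = Cardinal.continuum ∧ ∀ M : Set ℝ, IsMeagre M → (L ∩ M).Countable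

/-- `L` is a strong Luzin set. -/
def IsStrongLuzin (L : Set ℝ) : Prop :=
  IsLuzin L ∧ ∀ B : Set ℝ, MeasurableSet B → ¬ IsMeagre B → ¬ (L ∩ B).Countable

/-- `S` is a Sierpiński set. -/
def IsSierpinski (S : Set ℝ) : Prop :=
  Cardinal.mk S = Cardinal.continuum ∧ ∀ N : Set ℝ, volume N = 0 → (S ∩ N).Countable

/-- `S` is a strong Sierpiński set. -/
def IsStrongSierpinski (S : Set ℝ) : Prop :=
  IsSierpinski S ∧ ∀ B : Set ℝ, MeasurableSet B → 0 < volume B → ¬ (S ∩ B).Countable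

/-- `X` is a Bernstein set. -/
def IsBernstein (X : Set ℝ) : Prop :=
  ∀ P : Set ℝ, Perfect P → P.Nonempty → (P ∩ X).Nonempty ∧ (P ∩ Xᶜ).Nonempty

/-- `A ⊆ ℝ²` is completely `𝓜`-nonmeasurable. -/
def CompletelyMeagerNonmeasurable (A : Set (ℝ × ℝ)) : Prop :=
  ∀ B : Set (ℝ × ℝ), MeasurableSet B → ¬ IsMeagre B → (A ∩ B).Nonempty ∧ ¬ B ⊆ A

/-- `A ⊆ ℝ²` is completely `𝓝`-nonmeasurable. -/
def CompletelyNullNonmeasurable (A : Set (ℝ × ℝ)) : Prop :=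
  ∀ B : Set (ℝ × ℝ), MeasurableSet B → 0 < volume B → (A ∩ B).Nonempty ∧ ¬ B ⊆ A

/-- `n`-fold Minkowski sum (with `nFoldSum A 0 = {0}`). -/
def nFoldSum (A : Set ℝ) : ℕ → Set ℝ
  | 0 => {0}
  | n + 1 => nFoldSum A n + A

open Filter Topology

/-!
Call a set `B` negligible for a filter `F` when `Bᶜ ∈ F`; category and measure are the cases
`residual ℝ` and `ae volume`. Under CH the Borel sets can be listed in type `ω₁`, so choosing a
point of each non-negligible one outside the countably many negligible ones listed before it yields
a strong Luzin set `L` and a strong Sierpiński set `S`.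

Order `ℝ` in type `ω₁` and let `A` consist of the vertical lines over `L` on one side of the
diagonal and the horizontal lines through `S` on the other. Initial segments are countable, so each
horizontal slice is `L`, and each vertical slice is `S`, up to a countable set. As `ℝ` is the union
of a meagre set and a null set, Luzin sets are null and Sierpiński sets are meagre. Hence in both
senses the slices of `A` in one direction, and those of `Aᶜ` in the other, meet every
non-negligible Borel set, and the theorems of Kuratowski–Ulam and Fubini carry this over to the
plane.
-/

universe u v

section Residual

variable {X : Type*} [TopologicalSpace X]

instance residual_neBot [BaireSpace X] [Nonempty X] : (residual X).NeBot :=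
  forall_mem_nonempty_iff_neBot.1 fun _ hs => (dense_of_mem_residual hs).nonempty

instance residual_isMeasurablyGenerated [MeasurableSpace X] [BorelSpace X] :
    (residual X).IsMeasurablyGenerated where
  exists_measurable_subset s hs := by
    obtain ⟨𝒱, hopen, hdense, hcount, hsub⟩ := mem_residual_iff.1 hs
    refine ⟨⋂₀ 𝒱, ?_, .sInter hcount fun V hV => (hopen V hV).measurableSet, hsub⟩
    exact (countable_sInter_mem hcount).2 fun V hV =>
      residual_of_dense_open (hopen V hV) (hdense V hV)

end Residual

section Cocountable

variable {α : Type*} {F : Filter α} [CountableInterFilter F]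

theorem le_cocountable_of_forall_compl_singleton_mem (hF : ∀ x, {x}ᶜ ∈ F) : F ≤ cocountable := by
  intro s hs
  have hmem : (⋂ x ∈ sᶜ, {x}ᶜ) ∈ F :=
    (countable_bInter_mem (mem_cocountable.1 hs)).2 fun x _ => hF x
  simpa only [← compl_iUnion₂, biUnion_of_singleton, compl_compl] using hmem

theorem residual_le_cocountable {X : Type*} [TopologicalSpace X] [T1Space X] [PerfectSpace X] :
    residual X ≤ cocountable :=
  le_cocountable_of_forall_compl_singleton_mem fun x =>
    residual_of_dense_open isOpen_compl_singleton (dense_compl_singleton x)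

theorem ae_le_cocountable [MeasurableSpace α] (μ : Measure α) [NullSingletonClass μ] :
    ae μ ≤ cocountable :=
  le_cocountable_of_forall_compl_singleton_mem fun x => compl_mem_ae_iff.2 (measure_singleton x)

end Cocountable

section Thick

variable {α β : Type*} [MeasurableSpace α] [MeasurableSpace β] {F : Filter α} {A B : Set α}

/-- `A` is thick along `F` if it meets every measurable set that is not negligible, the negligible
sets being the complements of the members of `F`. For `F = ae μ` this says that `A` has full outer
measure; complete nonmeasurability is thickness of both `A` and `Aᶜ`. -/
def IsThick (F : Filter α) (A : Set α) : Prop :=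
  ∀ ⦃B : Set α⦄, MeasurableSet B → Bᶜ ∉ F → (A ∩ B).Nonempty

theorem isThick_of_mem (hA : A ∈ F) : IsThick F A := by
  intro B _ hBF
  by_contra hAB
  exact hBF (mem_of_superset hA fun x hxA hxB => hAB ⟨x, hxA, hxB⟩)

theorem IsThick.of_preimage {f : α → β} (hf : Measurable f) {A : Set β}
    (hA : IsThick F (f ⁻¹' A)) : IsThick (F.map f) A := by
  intro B hB hBF
  obtain ⟨x, hxA, hxB⟩ := hA (hf hB) hBF
  exact ⟨f x, hxA, hxB⟩

theorem IsThick.not_countable_inter [MeasurableSingletonClass α] (hF : F ≤ cocountable)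
    (hA : IsThick F A) (hB : MeasurableSet B) (hBF : Bᶜ ∉ F) : ¬ (A ∩ B).Countable := by
  intro hAB
  have hco : (A ∩ B)ᶜ ∈ F := hF (mem_cocountable.2 (by rwa [compl_compl]))
  have hdiff : (B \ (A ∩ B))ᶜ ∉ F := by
    intro h
    apply hBF
    filter_upwards [h, hco] with x hx hxAB hxB
    exact hx ⟨hxB, hxAB⟩
  obtain ⟨x, hxA, hxB, hxAB⟩ := hA (hB.diff hAB.measurableSet) hdiff
  exact hxAB ⟨hxA, hxB⟩

theorem IsThick.not_countable [MeasurableSingletonClass α] [F.NeBot] (hF : F ≤ cocountable)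
    (hA : IsThick F A) : ¬ A.Countable := by
  have hA_univ := hA.not_countable_inter hF .univ (by simp)
  rwa [inter_univ] at hA_univ

theorem completelyMeagerNonmeasurable_iff {A : Set (ℝ × ℝ)} :
    CompletelyMeagerNonmeasurable A ↔
      IsThick (residual (ℝ × ℝ)) A ∧ IsThick (residual (ℝ × ℝ)) Aᶜ := by
  simp only [CompletelyMeagerNonmeasurable, IsThick, IsMeagre, inter_comm Aᶜ,
    inter_compl_nonempty_iff, ← forall_and]

theorem completelyNullNonmeasurable_iff {A : Set (ℝ × ℝ)} :
    CompletelyNullNonmeasurable A ↔ IsThick (ae volume) A ∧ IsThick (ae volume) Aᶜ := by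
  simp only [CompletelyNullNonmeasurable, IsThick, compl_mem_ae_iff, pos_iff_ne_zero, ne_eq,
    inter_comm Aᶜ, inter_compl_nonempty_iff, ← forall_and]

end Thick

section KuratowskiUlam

open TopologicalSpace

variable {X Y : Type*} [TopologicalSpace X] [TopologicalSpace Y] [SecondCountableTopology Y]

theorem eventually_residual_dense_slice {V : Set (X × Y)} (hVo : IsOpen V) (hVd : Dense V) :
    ∀ᶠ x in residual X, Dense {y | (x, y) ∈ V} := by
  have meets_basis : ∀ u ∈ countableBasis Y, ∀ᶠ x in residual X, ∃ y ∈ u, (x, y) ∈ V := by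
    intro u hu
    have huo : IsOpen u := isOpen_of_mem_countableBasis hu
    have himage : {x | ∃ y ∈ u, (x, y) ∈ V} = Prod.fst '' (V ∩ Prod.snd ⁻¹' u) := by
      ext x
      simp [and_comm]
    refine residual_of_dense_open ?_ (dense_iff_inter_open.2 fun W hW hWne => ?_)
    · exact himage ▸ isOpenMap_fst _ (hVo.inter (huo.preimage continuous_snd))
    · obtain ⟨⟨x, y⟩, ⟨hx, hy⟩, hxy⟩ := hVd.inter_open_nonempty (W ×ˢ u) (hW.prod huo)
        (hWne.prod (nonempty_of_mem_countableBasis hu))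
      exact ⟨x, hx, y, hy, hxy⟩
  filter_upwards [(eventually_countable_ball (countable_countableBasis Y)).2 meets_basis] with x hx
  exact (isBasis_countableBasis Y).dense_iff.2 fun u hu _ => hx u hu

theorem eventually_eventually_residual_of_prod {P : X × Y → Prop}
    (hP : ∀ᶠ p in residual (X × Y), P p) :
    ∀ᶠ x in residual X, ∀ᶠ y in residual Y, P (x, y) := by
  obtain ⟨𝒱, hopen, hdense, hcount, hsub⟩ := mem_residual_iff.1 hP
  have hslices : ∀ᶠ x in residual X, ∀ V ∈ 𝒱, Dense {y | (x, y) ∈ V} :=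
    (eventually_countable_ball hcount).2 fun V hV =>
      eventually_residual_dense_slice (hopen V hV) (hdense V hV)
  filter_upwards [hslices] with x hx
  have hmem : ∀ᶠ y in residual Y, ∀ V ∈ 𝒱, (x, y) ∈ V :=
    (eventually_countable_ball hcount).2 fun V hV =>
      residual_of_dense_open ((hopen V hV).preimage (Continuous.prodMk_right x)) (hx V hV)
  filter_upwards [hmem] with y hy
  exact hsub hy

theorem isMeagre_of_eventually_isMeagre_slice [BaireSpace X] [BaireSpace Y] {B : Set (X × Y)}
    (hB : BaireMeasurableSet B) (hslice : ∀ᶠ x in residual X, IsMeagre {y | (x, y) ∈ B}) :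
    IsMeagre B := by
  obtain ⟨U, hU, hBU⟩ := hB.residualEq_isOpen
  suffices hUe : U = ∅ by
    subst hUe
    filter_upwards [hBU.mem_iff] with p hp
    exact hp.1
  by_contra hUne
  obtain ⟨⟨a, b⟩, hab⟩ := nonempty_iff_ne_empty.2 hUne
  have hresidual := hslice.and (eventually_eventually_residual_of_prod hBU.mem_iff)
  obtain ⟨x, hxb, hBx, hBUx⟩ := (dense_of_mem_residual hresidual).inter_open_nonempty
    {x | (x, b) ∈ U} (hU.preimage (Continuous.prodMk_left b)) ⟨a, hab⟩
  refine not_isMeagre_of_isOpen (s := {y | (x, y) ∈ U})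
    (hU.preimage (Continuous.prodMk_right x)) ⟨b, hxb⟩ ?_
  filter_upwards [hBx, hBUx] with y hyB hyBU
  exact fun hyU => hyB (hyBU.2 hyU)

end KuratowskiUlam

section ThickProd

variable {X Y : Type*} [MeasurableSpace X] [MeasurableSpace Y] {A : Set (X × Y)}

section Residual

variable [TopologicalSpace X] [TopologicalSpace Y] [BorelSpace X] [BorelSpace Y]
  [BaireSpace X] [BaireSpace Y]

theorem isThick_residual_prod_of_vertical [SecondCountableTopology Y]
    (hA : ∀ᶠ x in residual X, IsThick (residual Y) {y | (x, y) ∈ A}) :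
    IsThick (residual (X × Y)) A := by
  intro B hB hBres
  by_contra hAB
  refine hBres (isMeagre_of_eventually_isMeagre_slice hB.baireMeasurableSet ?_)
  filter_upwards [hA] with x hx
  by_contra hBx
  obtain ⟨y, hyA, hyB⟩ := hx (measurable_prodMk_left hB) hBx
  exact hAB ⟨(x, y), hyA, hyB⟩

theorem isThick_residual_prod_of_horizontal [SecondCountableTopology X]
    (hA : ∀ᶠ y in residual Y, IsThick (residual X) {x | (x, y) ∈ A}) :
    IsThick (residual (X × Y)) A := by
  rw [← (Homeomorph.prodComm Y X).residual_map_eq]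
  exact IsThick.of_preimage measurable_swap (isThick_residual_prod_of_vertical hA)

end Residual

variable {μ : Measure X} {ν : Measure Y} [SFinite ν]

theorem isThick_ae_prod_of_vertical (hA : ∀ᵐ x ∂μ, IsThick (ae ν) {y | (x, y) ∈ A}) :
    IsThick (ae (μ.prod ν)) A := by
  intro B hB hBae
  by_contra hAB
  refine hBae (compl_mem_ae_iff.2 ((Measure.measure_prod_null hB).2 ?_))
  filter_upwards [hA] with x hx
  by_contra hBx
  obtain ⟨y, hyA, hyB⟩ := hx (measurable_prodMk_left hB) (mt compl_mem_ae_iff.1 hBx)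
  exact hAB ⟨(x, y), hyA, hyB⟩

theorem isThick_ae_prod_of_horizontal [SFinite μ]
    (hA : ∀ᵐ y ∂ν, IsThick (ae μ) {x | (x, y) ∈ A}) : IsThick (ae (μ.prod ν)) A := by
  have map_swap_ae : map Prod.swap (ae (ν.prod μ)) = ae (μ.prod ν) :=
    (MeasurableEquiv.prodComm.map_ae (ν.prod μ)).trans (congrArg ae Measure.prod_swap)
  rw [← map_swap_ae]
  exact IsThick.of_preimage measurable_swap (isThick_ae_prod_of_vertical hA)

end ThickProd

section StrongLuzin

variable {α : Type*} [MeasurableSpace α] {F G : Filter α} {L L' : Set α}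

/-- The strong Luzin sets relative to the `σ`-ideal of complements of members of `F`: strong Luzin
sets for `F = residual ℝ`, strong Sierpiński sets for `F = ae volume`. Thickness stands in for
uncountable intersections, which follow by `IsThick.not_countable_inter`; the cardinality is left
out because under CH it is automatic. -/
structure IsStrongLuzinAlong (F : Filter α) (L : Set α) : Prop where
  countable_inter : ∀ ⦃M : Set α⦄, Mᶜ ∈ F → (L ∩ M).Countable
  isThick : IsThick F L

theorem IsStrongLuzinAlong.congr [MeasurableSingletonClass α] (hL : IsStrongLuzinAlong F L)
    (hF : F ≤ cocountable) (hLL' : L =ᶠ[cocountable] L') : IsStrongLuzinAlong F L' := by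
  have hdiff : {x | (x ∈ L ↔ x ∈ L')}ᶜ.Countable := mem_cocountable.1 hLL'.mem_iff
  refine ⟨fun M hM => ((hL.countable_inter hM).union hdiff).mono ?_, fun B hB hBF => ?_⟩
  · rintro x ⟨hxL', hxM⟩
    by_cases hx : x ∈ L
    · exact .inl ⟨hx, hxM⟩
    · exact .inr fun h => hx (h.2 hxL')
  · by_contra hL'B
    refine hL.isThick.not_countable_inter hF hB hBF (hdiff.mono ?_)
    exact fun x ⟨hxL, hxB⟩ h => hL'B ⟨x, h.1 hxL, hxB⟩

theorem IsStrongLuzinAlong.compl_mem_of_disjoint (hL : IsStrongLuzinAlong F L)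
    (hFG : Disjoint F G) (hG : G ≤ cocountable) : Lᶜ ∈ G := by
  obtain ⟨s, hs, t, ht, hst⟩ := Filter.disjoint_iff.1 hFG
  have hLs : (L ∩ sᶜ).Countable := hL.countable_inter (by rwa [compl_compl])
  filter_upwards [ht, hG (mem_cocountable.2 (by rwa [compl_compl]))] with x hxt hx hxL
  exact hx ⟨hxL, hst.notMem_of_mem_right hxt⟩

end StrongLuzin

theorem continuum_eq_aleph_one_of_universe (h : Cardinal.continuum.{u} = ℵ₁) :
    Cardinal.continuum.{v} = ℵ₁ := by
  apply Cardinal.lift_injective.{u, v}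
  simpa using congrArg Cardinal.lift.{v, u} h

theorem exists_linearOrder_countable_Iic {α : Type*} (hα : #α ≤ ℵ₁) :
    ∃ _ : LinearOrder α, ∀ a : α, (Iic a).Countable := by
  obtain ⟨_, _, hord⟩ := exists_ord_eq_type_lt α
  refine ⟨inferInstance, fun a => ?_⟩
  have hIio : (Iio a).Countable := by
    rw [← le_aleph0_iff_set_countable, ← lt_aleph_one_iff]
    exact (mk_Iio_lt a hord).trans_le hα
  simpa [← Iio_insert] using hIio

theorem mk_measurableSet_le_continuum (α : Type*) [MeasurableSpace α]
    [MeasurableSpace.CountablyGenerated α] : #{s : Set α // MeasurableSet s} ≤ 𝔠 := by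
  obtain ⟨b, hb, hgen⟩ := MeasurableSpace.CountablyGenerated.isCountablyGenerated (α := α)
  subst hgen
  exact MeasurableSpace.cardinal_measurableSet_le_continuum
    (hb.le_aleph0.trans aleph0_le_continuum)

theorem mk_eq_continuum_of_not_countable {α : Type u} (hCH : Cardinal.continuum.{u} = ℵ₁)
    (hα : #α ≤ 𝔠) {s : Set α} (hs : ¬ s.Countable) : #s = 𝔠 := by
  refine le_antisymm ((mk_set_le s).trans hα) ?_
  rwa [← le_aleph0_iff_set_countable, not_le, ← aleph_one_le_iff, ← hCH] at hs

theorem exists_countable_inter_and_nonempty_inter {ι α : Type*} [LinearOrder ι]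
    (hι : ∀ i : ι, (Iic i).Countable) (F : Filter α) [CountableInterFilter F] (e : ι → Set α) :
    ∃ L : Set α, (∀ i, (e i)ᶜ ∈ F → (L ∩ e i).Countable) ∧
      ∀ i, (e i)ᶜ ∉ F → (L ∩ e i).Nonempty := by
  have exists_point (i : {i // (e i)ᶜ ∉ F}) :
      ∃ x ∈ e i, ∀ j ∈ Iio i.1, (e j)ᶜ ∈ F → x ∉ e j := by
    have hfreq : ∃ᶠ x in F, x ∈ e i := i.2
    have havoid : ∀ᶠ x in F, ∀ j ∈ Iio i.1, (e j)ᶜ ∈ F → x ∉ e j :=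
      (eventually_countable_ball ((hι i).mono Iio_subset_Iic_self)).2 fun j _ =>
        eventually_imp_distrib_left.2 id
    exact (hfreq.and_eventually havoid).exists
  choose x hx_mem hx_avoid using exists_point
  refine ⟨range x, fun i hi => ?_, fun i hi => ⟨x ⟨i, hi⟩, mem_range_self _, hx_mem ⟨i, hi⟩⟩⟩
  refine (((hι i).preimage Subtype.val_injective).image x).mono ?_
  rintro _ ⟨⟨j, rfl⟩, hji⟩
  exact ⟨j, not_lt.1 fun hij => hx_avoid j i hij hi hji, rfl⟩

theorem exists_isStrongLuzinAlong {α : Type*} [MeasurableSpace α]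
    (hα : #{s : Set α // MeasurableSet s} ≤ ℵ₁) (F : Filter α) [CountableInterFilter F]
    [F.IsMeasurablyGenerated] : ∃ L : Set α, IsStrongLuzinAlong F L := by
  obtain ⟨_, hIic⟩ := exists_linearOrder_countable_Iic hα
  obtain ⟨L, hcount, hthick⟩ := exists_countable_inter_and_nonempty_inter hIic F Subtype.val
  refine ⟨L, fun M hM => ?_, fun B hB => hthick ⟨B, hB⟩⟩
  obtain ⟨t, htF, ht, htM⟩ := IsMeasurablyGenerated.exists_measurable_subset hM
  exact (hcount ⟨tᶜ, ht.compl⟩ (by rwa [compl_compl])).mono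
    (inter_subset_inter_right L (subset_compl_comm.1 htM))

section Interleave

variable {X : Type*} [LinearOrder X]

/-- The vertical lines over `L` on one side of the diagonal, together with the horizontal lines
through `S` on the other. When initial segments are countable, the slices in the two directions are
`L` and `S` up to countable sets. -/
def interleave (L S : Set X) : Set (X × X) :=
  {p | p.1 ∈ L ∧ p.2 < p.1 ∨ p.2 ∈ S ∧ p.1 < p.2}

theorem Ioi_mem_cocountable (hX : ∀ x : X, (Iic x).Countable) (x : X) : Ioi x ∈ cocountable :=
  mem_cocountable.2 (by rw [compl_Ioi]; exact hX x)

theorem horizontal_slice_interleave_eventuallyEq (hX : ∀ x : X, (Iic x).Countable) (L S : Set X)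
    (y : X) : {x | (x, y) ∈ interleave L S} =ᶠ[cocountable] L := by
  rw [eventuallyEq_set]
  filter_upwards [Ioi_mem_cocountable hX y] with x (hyx : y < x)
  simp [interleave, hyx, hyx.not_gt]

theorem vertical_slice_interleave_eventuallyEq (hX : ∀ x : X, (Iic x).Countable) (L S : Set X)
    (x : X) : {y | (x, y) ∈ interleave L S} =ᶠ[cocountable] S := by
  rw [eventuallyEq_set]
  filter_upwards [Ioi_mem_cocountable hX x] with y (hxy : x < y)
  simp [interleave, hxy, hxy.not_gt]

end Interleave

theorem exists_forall_slice_isStrongLuzinAlong {X : Type*} [MeasurableSpace X]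
    [MeasurableSingletonClass X] (hX : #{s : Set X // MeasurableSet s} ≤ ℵ₁) {F G : Filter X}
    [CountableInterFilter F] [F.IsMeasurablyGenerated] [CountableInterFilter G]
    [G.IsMeasurablyGenerated] (hF : F ≤ cocountable) (hG : G ≤ cocountable) :
    ∃ A : Set (X × X), (∀ y, IsStrongLuzinAlong F {x | (x, y) ∈ A}) ∧
      ∀ x, IsStrongLuzinAlong G {y | (x, y) ∈ A} := by
  have singleton_injective : Function.Injective
      fun x : X => (⟨{x}, .singleton x⟩ : {s : Set X // MeasurableSet s}) :=
    fun x y h => singleton_injective (congrArg Subtype.val h)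
  obtain ⟨_, hIic⟩ :=
    exists_linearOrder_countable_Iic ((mk_le_of_injective singleton_injective).trans hX)
  obtain ⟨L, hL⟩ := exists_isStrongLuzinAlong hX F
  obtain ⟨S, hS⟩ := exists_isStrongLuzinAlong hX G
  exact ⟨interleave L S,
    fun y => hL.congr hF (horizontal_slice_interleave_eventuallyEq hIic L S y).symm,
    fun x => hS.congr hG (vertical_slice_interleave_eventuallyEq hIic L S x).symm⟩

theorem IsStrongLuzinAlong.isStrongLuzin (hCH : Cardinal.continuum.{0} = ℵ₁) {L : Set ℝ}
    (hL : IsStrongLuzinAlong (residual ℝ) L) : IsStrongLuzin L :=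
  ⟨⟨mk_eq_continuum_of_not_countable hCH mk_real.le
      (hL.isThick.not_countable residual_le_cocountable), hL.countable_inter⟩,
    fun _ => hL.isThick.not_countable_inter residual_le_cocountable⟩

theorem IsStrongLuzinAlong.isStrongSierpinski (hCH : Cardinal.continuum.{0} = ℵ₁) {S : Set ℝ}
    (hS : IsStrongLuzinAlong (ae volume) S) : IsStrongSierpinski S :=
  ⟨⟨mk_eq_continuum_of_not_countable hCH mk_real.le
      (hS.isThick.not_countable (ae_le_cocountable volume)),
      fun _ hN => hS.countable_inter (compl_mem_ae_iff.2 hN)⟩,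
    fun _ hB hBpos => hS.isThick.not_countable_inter (ae_le_cocountable volume) hB
      (mt compl_mem_ae_iff.1 hBpos.ne')⟩

theorem stmt_4 (hCH : Cardinal.continuum = Cardinal.aleph 1) :
    ∃ A : Set (ℝ × ℝ),
      (∀ y : ℝ, IsStrongLuzin {x : ℝ | (x, y) ∈ A}) ∧
      (∀ x : ℝ, IsStrongSierpinski {y : ℝ | (x, y) ∈ A}) ∧
      CompletelyMeagerNonmeasurable A ∧ CompletelyNullNonmeasurable A := by
  have hCH₀ : Cardinal.continuum.{0} = ℵ₁ := continuum_eq_aleph_one_of_universe hCH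
  have hresidual : residual ℝ ≤ cocountable := residual_le_cocountable
  have hae : ae (volume : Measure ℝ) ≤ cocountable := ae_le_cocountable volume
  obtain ⟨A, hLuzin, hSierpinski⟩ := exists_forall_slice_isStrongLuzinAlong
    ((mk_measurableSet_le_continuum ℝ).trans hCH₀.le) hresidual hae
  have horizontal_null (y : ℝ) : {x | (x, y) ∈ A}ᶜ ∈ ae volume :=
    (hLuzin y).compl_mem_of_disjoint Real.disjoint_residual_ae hae
  have vertical_meagre (x : ℝ) : {y | (x, y) ∈ A}ᶜ ∈ residual ℝ :=
    (hSierpinski x).compl_mem_of_disjoint Real.disjoint_residual_ae.symm hresidual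
  refine ⟨A, fun y => (hLuzin y).isStrongLuzin hCH₀,
    fun x => (hSierpinski x).isStrongSierpinski hCH₀,
    completelyMeagerNonmeasurable_iff.2 ⟨?_, ?_⟩, completelyNullNonmeasurable_iff.2 ⟨?_, ?_⟩⟩
  · exact isThick_residual_prod_of_horizontal (.of_forall fun y => (hLuzin y).isThick)
  · exact isThick_residual_prod_of_vertical (.of_forall fun x => isThick_of_mem (vertical_meagre x))
  · exact isThick_ae_prod_of_vertical (.of_forall fun x => (hSierpinski x).isThick)
  · exact isThick_ae_prod_of_horizontal (.of_forall fun y => isThick_of_mem (horizontal_null y))
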